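/- Let d ≥ 1 and let μ, ν be Borel probability measures on ℝ^d with finite second moments. Then μ and ν are in convex order (μ ≼_c ν) if and only if for every Borel probability measure ρ on ℝ^d with bounded support and every point z ∈ ℝ^d one has W₂(ν,ρ)² − W₂(μ,ρ)² ≤ W₂(ν,δ_z)² − W₂(μ,δ_z)², where δ_z denotes the Dirac measure at z. -/

import Mathlib

open MeasureTheory Metric

noncomputable section

/-- The set of couplings of two measures on `ℝ^d`. -/
def Couplings {d : ℕ} (α β : Measure (EuclideanSpace ℝ (Fin d))) :
    Set (Measure (EuclideanSpace ℝ (Fin d) × EuclideanSpace ℝ (Fin d))) :=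
  {π | π.map Prod.fst = α ∧ π.map Prod.snd = β}

/-- The squared 2-Wasserstein distance `W₂(α,β)² = inf_{π ∈ Π(α,β)} ∫ |x-y|² dπ`. -/
def W2sq {d : ℕ} (α β : Measure (EuclideanSpace ℝ (Fin d))) : ℝ :=
  sInf {r : ℝ | ∃ π ∈ Couplings α β, r = ∫ p, ‖p.1 - p.2‖ ^ 2 ∂π}

/-- Convex order: `∫ f dμ ≤ ∫ f dν` for all convex `f` integrable w.r.t. both. -/
def ConvexOrder {d : ℕ} (μ ν : Measure (EuclideanSpace ℝ (Fin d))) : Prop :=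
  ∀ f : EuclideanSpace ℝ (Fin d) → ℝ, ConvexOn ℝ Set.univ f →
    Integrable f μ → Integrable f ν → ∫ x, f x ∂μ ≤ ∫ x, f x ∂ν
/-!
For measures with second moments, `W₂(α, β)² = ∫ |x|² dα + ∫ |y|² dβ - 2 C(α, β)`, where
`C(α, β)` is the supremum of `∫ ⟪x, y⟫ dπ` over couplings `π`, and `C(α, δ_z) = ∫ ⟪x, z⟫ dα`.
Convex order forces equal means, so the theorem says that `μ ≼_c ν` is equivalent to
`C(μ, ρ) ≤ C(ν, ρ)` for all `ρ` of bounded support.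

If `μ ≼_c ν`, let `π` couple `μ` with `ρ`, and split `ρ` along the fibres of a simple function
close to the identity in `L²(ρ)`. This splits `μ` into measures `μᵢ`, and Strassen's theorem splits
`ν = ∑ κᵢ` so that `κᵢ` integrates affine functions as `μᵢ` does: the condition
`∑ ∫ uᵢ dμᵢ ≤ ∫ maxᵢ uᵢ dν` for affine `uᵢ` is an instance of convex order, and a Hahn–Banach
extension, represented in `L²(ν)`, yields the `κᵢ`. Gluing `κᵢ` to the `i`-th piece of `ρ` couples
`ν` with `ρ` at almost the same correlation.

Conversely, a convex `f` is an increasing limit of maxima of finitely many affine functions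
`⟪x, y⟫ + b y`. If `S x` is the slope of one attaining the maximum at `x`, the graph of `S` couples
`μ` with the law `ρ` of `S`, while `⟪x, y⟫ ≤ (⟪x, S x⟫ + b (S x)) - b y` bounds `C(ν, ρ)`. Hence
`C(μ, ρ) ≤ C(ν, ρ)` compares the integrals of the maximum.
-/

open scoped RealInnerProductSpace ENNReal

section Sublinear

variable {U F : Type*} [AddCommGroup U] [Module ℝ U] [AddCommGroup F] [Module ℝ F]

lemma exists_comp_eq_of_le_sublinear (T : U →ₗ[ℝ] F) (f : U →ₗ[ℝ] ℝ) (N : F → ℝ)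
    (N_hom : ∀ c : ℝ, 0 < c → ∀ x, N (c • x) = c * N x) (N_add : ∀ x y, N (x + y) ≤ N x + N y)
    (hf : ∀ u, f u ≤ N (T u)) :
    ∃ g : F →ₗ[ℝ] ℝ, g ∘ₗ T = f ∧ ∀ x, g x ≤ N x := by
  have N_zero : N 0 = 0 := by
    have := N_hom 2 two_pos 0
    rw [smul_zero] at this
    linarith
  have hker : f ∈ T.ker.dualAnnihilator := by
    refine (Submodule.mem_dualAnnihilator f).2 fun u hu => le_antisymm ?_ ?_
    · simpa [LinearMap.mem_ker.1 hu, N_zero] using hf u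
    · simpa [LinearMap.mem_ker.1 hu, N_zero] using hf (-u)
  rw [← LinearMap.range_dualMap_eq_dualAnnihilator_ker] at hker
  obtain ⟨f', rfl⟩ := hker
  obtain ⟨g, hg, hgN⟩ := exists_extension_of_le_sublinear (f'.toPMap T.range) N N_hom N_add
    (by rintro ⟨_, u, rfl⟩; exact hf u)
  exact ⟨g, LinearMap.ext fun u => hg ⟨T u, u, rfl⟩, hgN⟩

variable {ι : Type*} [Fintype ι] [Nonempty ι] [Lattice F]

lemma sup'_smul [PosSMulMono ℝ F] {c : ℝ} (hc : 0 < c) (φ : ι → F) :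
    Finset.univ.sup' Finset.univ_nonempty (c • φ) =
      c • Finset.univ.sup' Finset.univ_nonempty φ :=
  (map_finset_sup' (OrderIso.smulRight hc) Finset.univ_nonempty φ).symm

lemma sup'_add_le {F : Type*} [AddCommGroup F] [Lattice F] [IsOrderedAddMonoid F] (φ ψ : ι → F) :
    Finset.univ.sup' Finset.univ_nonempty (φ + ψ) ≤
      Finset.univ.sup' Finset.univ_nonempty φ + Finset.univ.sup' Finset.univ_nonempty ψ :=
  Finset.sup'_le _ _ fun _ hi => add_le_add (Finset.le_sup' φ hi) (Finset.le_sup' ψ hi)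

variable [IsOrderedAddMonoid F] [PosSMulMono ℝ F]

/- Strassen's sandwich theorem: extend the functional from the image of `T` to all of `ι → F`, where
it is automatically a sum of functionals of the individual coordinates. -/
theorem exists_sum_eq_comp_eq_of_le_sup' {Λ : F →ₗ[ℝ] ℝ} (hΛ : Monotone Λ) (T : ι → U →ₗ[ℝ] F)
    (f : ι → U →ₗ[ℝ] ℝ)
    (hf : ∀ u : ι → U,
      ∑ i, f i (u i) ≤ Λ (Finset.univ.sup' Finset.univ_nonempty fun i => T i (u i))) :
    ∃ g : ι → F →ₗ[ℝ] ℝ, (∀ i, Monotone (g i)) ∧ ∑ i, g i = Λ ∧ ∀ i, g i ∘ₗ T i = f i := by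
  classical
  obtain ⟨g, hgT, hgΛ⟩ := exists_comp_eq_of_le_sublinear (LinearMap.piMap T)
    (LinearMap.lsum ℝ (fun _ => U) ℝ f)
    (fun φ => Λ (Finset.univ.sup' Finset.univ_nonempty φ))
    (fun c hc φ => by simp only [sup'_smul hc, map_smul, smul_eq_mul])
    (fun φ ψ => (hΛ (sup'_add_le φ ψ)).trans_eq (map_add ..))
    (fun u => by rw [LinearMap.lsum_apply, LinearMap.sum_apply]; exact hf u)
  have g_single_nonpos (i : ι) (φ : F) (hφ : φ ≤ 0) : g (Pi.single i φ) ≤ 0 := by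
    refine (hgΛ _).trans ((hΛ (Finset.sup'_le _ _ fun j _ => ?_)).trans_eq (map_zero Λ))
    rcases eq_or_ne j i with rfl | hj
    · simpa using hφ
    · simp [hj]
  have g_const_le (φ : F) : g (fun _ => φ) ≤ Λ φ := by
    simpa only [Finset.sup'_const] using hgΛ fun _ => φ
  refine ⟨fun i => g ∘ₗ LinearMap.single ℝ (fun _ => F) i, fun i φ ψ h => ?_,
    LinearMap.ext fun φ => ?_, fun i => LinearMap.ext fun u => ?_⟩
  · have := g_single_nonpos i (φ - ψ) (sub_nonpos.2 h)
    rw [Pi.single_sub, map_sub] at this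
    simpa using this
  · have h_neg : -g (fun _ => φ) ≤ -Λ φ := by
      rw [← map_neg, ← map_neg]
      exact g_const_le (-φ)
    have h_sum : ∑ i, g (Pi.single i φ) = g fun _ => φ := by
      rw [← map_sum, Finset.univ_sum_single fun _ => φ]
    simpa [h_sum] using le_antisymm (g_const_le φ) (neg_le_neg_iff.1 h_neg)
  · have h_single := congr($hgT (Pi.single i u))
    have h_piMap : LinearMap.piMap T (Pi.single i u) = Pi.single i (T i u) :=
      (Pi.single_op (fun j => T j) (fun j => map_zero (T j)) i u).symm
    rwa [LinearMap.lsum_piSingle, LinearMap.comp_apply, h_piMap] at h_single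

end Sublinear

section RieszL2

lemma norm_le_opNorm_mul_norm_of_monotone {F : Type*} [NormedAddCommGroup F] [Lattice F]
    [HasSolidNorm F] [IsOrderedAddMonoid F] [NormedSpace ℝ F] {g : F →ₗ[ℝ] ℝ} {Λ : F →L[ℝ] ℝ}
    (g_mono : Monotone g) (hg : ∀ φ, 0 ≤ φ → g φ ≤ Λ φ) (φ : F) : ‖g φ‖ ≤ ‖Λ‖ * ‖φ‖ := by
  have h_abs : |g φ| ≤ g |φ| :=
    abs_le'.2 ⟨g_mono (le_abs_self φ), by rw [← map_neg]; exact g_mono (neg_le_abs φ)⟩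
  calc ‖g φ‖ ≤ Λ |φ| := h_abs.trans (hg _ (abs_nonneg φ))
    _ ≤ ‖Λ‖ * ‖|φ|‖ := (le_abs_self _).trans (Λ.le_opNorm _)
    _ = ‖Λ‖ * ‖φ‖ := by rw [norm_abs_eq_norm]

variable {X : Type*} [MeasurableSpace X] {ν : Measure X}

instance posSMulMono_Lp {p : ℝ≥0∞} : PosSMulMono ℝ (Lp ℝ p ν) where
  smul_le_smul_of_nonneg_left c hc φ ψ h := by
    rw [← Lp.coeFn_le] at h ⊢
    filter_upwards [h, Lp.coeFn_smul c φ, Lp.coeFn_smul c ψ] with x hx hφ hψ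
    rw [hφ, hψ]
    exact smul_le_smul_of_nonneg_left hx hc

variable [IsFiniteMeasure ν]

/-- The indicator function of a set, as an element of `L²`. -/
def indicatorL2 (ν : Measure X) [IsFiniteMeasure ν] {A : Set X} (hA : MeasurableSet A) :
    Lp ℝ 2 ν :=
  indicatorConstLp 2 hA (measure_ne_top ν A) 1

lemma indicatorL2_nonneg {A : Set X} (hA : MeasurableSet A) : 0 ≤ indicatorL2 ν hA := by
  rw [← Lp.coeFn_nonneg]
  filter_upwards [indicatorConstLp_coeFn (p := 2) (hs := hA) (hμs := measure_ne_top ν A)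
    (c := (1 : ℝ))] with x hx
  rw [indicatorL2, hx]
  exact Set.indicator_nonneg (fun _ _ => zero_le_one) x

/-- Integration against a finite measure, as a functional on `L²`: it is the inner product with the
constant function `1`. -/
def integralL2 (ν : Measure X) [IsFiniteMeasure ν] : Lp ℝ 2 ν →L[ℝ] ℝ :=
  innerSL ℝ (indicatorL2 ν .univ)

lemma integralL2_apply (φ : Lp ℝ 2 ν) : integralL2 ν φ = ∫ x, φ x ∂ν := by
  rw [integralL2, innerSL_apply_apply, indicatorL2, L2.inner_indicatorConstLp_one,
    setIntegral_univ]

lemma monotone_integralL2 : Monotone (integralL2 ν) := fun φ ψ h => by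
  rw [integralL2_apply, integralL2_apply]
  exact integral_mono_ae ((Lp.memLp φ).integrable one_le_two) ((Lp.memLp ψ).integrable one_le_two)
    ((Lp.coeFn_le φ ψ).2 h)

lemma integralL2_indicatorL2 {A : Set X} (hA : MeasurableSet A) :
    integralL2 ν (indicatorL2 ν hA) = ν.real A := by
  rw [integralL2_apply, indicatorL2, integral_indicatorConstLp, smul_eq_mul, mul_one]

lemma exists_inner_eq_of_monotone {g : Lp ℝ 2 ν →ₗ[ℝ] ℝ} (g_mono : Monotone g)
    (hg : ∀ φ, 0 ≤ φ → g φ ≤ integralL2 ν φ) :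
    ∃ h : Lp ℝ 2 ν, 0 ≤ h ∧ ∀ φ, g φ = ⟪h, φ⟫ := by
  let G := g.mkContinuous _ (norm_le_opNorm_mul_norm_of_monotone g_mono hg)
  have hG (φ : Lp ℝ 2 ν) : g φ = ⟪(InnerProductSpace.toDual ℝ _).symm G, φ⟫ :=
    (InnerProductSpace.toDual_symm_apply (y := G)).symm
  refine ⟨_, ?_, hG⟩
  rw [← Lp.coeFn_nonneg]
  refine ae_nonneg_of_forall_setIntegral_nonneg ((Lp.memLp _).integrable one_le_two)
    fun A hA _ => ?_
  rw [← L2.inner_indicatorConstLp_one hA (measure_ne_top ν A), real_inner_comm, ← hG]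
  exact (map_zero g).symm.trans_le (g_mono (indicatorL2_nonneg hA))

lemma exists_measure_integral_eq_of_monotone {g : Lp ℝ 2 ν →ₗ[ℝ] ℝ} (g_mono : Monotone g)
    (hg : ∀ φ, 0 ≤ φ → g φ ≤ integralL2 ν φ) :
    ∃ κ ≤ ν, ∀ φ, ∫ x, φ x ∂κ = g φ := by
  obtain ⟨h, h_nonneg, hgh⟩ := exists_inner_eq_of_monotone g_mono hg
  have h_ae : 0 ≤ᵐ[ν] h := (Lp.coeFn_nonneg h).2 h_nonneg
  refine ⟨ν.withDensity fun x => .ofReal (h x), Measure.le_iff.2 fun A hA => ?_, fun φ => ?_⟩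
  · rw [withDensity_apply _ hA, ← ofReal_integral_eq_lintegral_ofReal
      ((Lp.memLp h).integrable one_le_two).integrableOn (ae_restrict_of_ae h_ae),
      ← L2.inner_indicatorConstLp_one hA (measure_ne_top ν A), real_inner_comm, ← hgh,
      ← ofReal_measureReal (measure_ne_top ν A), ← integralL2_indicatorL2 hA]
    exact ENNReal.ofReal_le_ofReal (hg _ (indicatorL2_nonneg hA))
  · rw [integral_withDensity_eq_integral_toReal_smul₀
      (Lp.aestronglyMeasurable h).aemeasurable.ennreal_ofReal (by simp), hgh, L2.inner_def]
    refine integral_congr_ae ?_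
    filter_upwards [h_ae] with x hx
    rw [ENNReal.toReal_ofReal hx, smul_eq_mul, real_inner_comm, RCLike.inner_apply, conj_trivial]

theorem exists_sum_measure_integral_eq_of_monotone {ι : Type*} [Fintype ι]
    {g : ι → Lp ℝ 2 ν →ₗ[ℝ] ℝ} (g_mono : ∀ i, Monotone (g i))
    (hg : ∑ i, g i = (integralL2 ν).toLinearMap) :
    ∃ κ : ι → Measure X, ∑ i, κ i = ν ∧ ∀ i, κ i ≤ ν ∧ ∀ φ, ∫ x, φ x ∂κ i = g i φ := by
  have g_le (i : ι) (φ : Lp ℝ 2 ν) (hφ : 0 ≤ φ) : g i φ ≤ integralL2 ν φ := by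
    rw [← ContinuousLinearMap.coe_coe, ← hg, LinearMap.sum_apply]
    exact Finset.single_le_sum (f := fun j => g j φ)
      (fun j _ => (map_zero (g j)).symm.trans_le (g_mono j hφ)) (Finset.mem_univ i)
  choose κ hκν hκ using fun i => exists_measure_integral_eq_of_monotone (g_mono i) (g_le i)
  refine ⟨κ, Measure.ext fun A hA => ?_, fun i => ⟨hκν i, hκ i⟩⟩
  have (i : ι) : IsFiniteMeasure (κ i) := isFiniteMeasure_of_le ν (hκν i)
  have κ_real (i : ι) : (κ i).real A = g i (indicatorL2 ν hA) := by
    rw [← hκ, indicatorL2, integral_congr_ae ((hκν i).absolutelyContinuous indicatorConstLp_coeFn),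
      integral_indicator_const _ hA, smul_eq_mul, mul_one]
  rw [← measureReal_eq_measureReal_iff]
  calc (∑ i, κ i).real A = ∑ i, (κ i).real A := by
        rw [measureReal_def, Measure.finsetSum_apply,
          ENNReal.toReal_sum fun i _ => measure_ne_top (κ i) A]
        rfl
    _ = (∑ i, g i) (indicatorL2 ν hA) := by simp only [κ_real, LinearMap.sum_apply]
    _ = ν.real A := by rw [hg]; exact integralL2_indicatorL2 hA

end RieszL2

section Decomposition

variable {E : Type*} [NormedAddCommGroup E] [NormedSpace ℝ E]

lemma convexOn_continuousAffineMap (w : E →ᴬ[ℝ] ℝ) : ConvexOn ℝ Set.univ w :=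
  (convexOn_id convex_univ).comp_affineMap (w : E →ᵃ[ℝ] ℝ)

variable [MeasurableSpace E]

/-- Convex order tested on continuous convex functions only. In finite dimension this is the usual
convex order, because convex functions are then continuous. -/
def ContinuousConvexOrder (μ ν : Measure E) : Prop :=
  ∀ f : E → ℝ, ConvexOn ℝ Set.univ f → Continuous f →
    Integrable f μ → Integrable f ν → ∫ x, f x ∂μ ≤ ∫ x, f x ∂ν

lemma memLp_continuousAffineMap {p : ℝ≥0∞} {μ : Measure E} [IsFiniteMeasure μ] (hμ : MemLp id p μ)
    (w : E →ᴬ[ℝ] ℝ) : MemLp w p μ := by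
  rw [w.decomp]
  exact (w.contLinear.comp_memLp' hμ).add (memLp_const _)

/-- Continuous affine functions as elements of `L²`. -/
def affineToL2 {μ : Measure E} [IsFiniteMeasure μ] (hμ : MemLp id 2 μ) :
    (E →ᴬ[ℝ] ℝ) →ₗ[ℝ] Lp ℝ 2 μ where
  toFun w := (memLp_continuousAffineMap hμ w).toLp w
  map_add' _ _ := rfl
  map_smul' _ _ := rfl

lemma integral_affineToL2 {μ κ : Measure E} [IsFiniteMeasure μ] (hμ : MemLp id 2 μ) (hκ : κ ≤ μ)
    (w : E →ᴬ[ℝ] ℝ) : ∫ x, affineToL2 hμ w x ∂κ = ∫ x, w x ∂κ :=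
  integral_congr_ae (hκ.absolutelyContinuous (memLp_continuousAffineMap hμ w).coeFn_toLp)

lemma integralL2_affineToL2 {μ : Measure E} [IsFiniteMeasure μ] (hμ : MemLp id 2 μ)
    (w : E →ᴬ[ℝ] ℝ) : integralL2 μ (affineToL2 hμ w) = ∫ x, w x ∂μ := by
  rw [integralL2_apply, integral_affineToL2 hμ le_rfl]

lemma ContinuousConvexOrder.integral_continuousAffineMap_eq {μ ν : Measure E} [IsFiniteMeasure μ]
    [IsFiniteMeasure ν] (hμ : MemLp id 1 μ) (hν : MemLp id 1 ν) (h : ContinuousConvexOrder μ ν)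
    (w : E →ᴬ[ℝ] ℝ) : ∫ x, w x ∂μ = ∫ x, w x ∂ν := by
  have integral_le (v : E →ᴬ[ℝ] ℝ) : ∫ x, v x ∂μ ≤ ∫ x, v x ∂ν :=
    h v (convexOn_continuousAffineMap v) v.continuous
      (memLp_one_iff_integrable.1 (memLp_continuousAffineMap hμ v))
      (memLp_one_iff_integrable.1 (memLp_continuousAffineMap hν v))
  refine le_antisymm (integral_le w) (neg_le_neg_iff.1 ?_)
  simpa [integral_neg] using integral_le (-w)

variable {ι : Type*} [Fintype ι] [Nonempty ι]

lemma sum_integral_le_of_convexOrder {μ : ι → Measure E} [∀ i, IsFiniteMeasure (μ i)]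
    {ν : Measure E} [IsFiniteMeasure ν] (hμ : ∀ i, MemLp id 2 (μ i)) (hν : MemLp id 2 ν)
    (h : ContinuousConvexOrder (∑ i, μ i) ν) (u : ι → E →ᴬ[ℝ] ℝ) :
    ∑ i, ∫ x, u i x ∂μ i ≤
      integralL2 ν (Finset.univ.sup' Finset.univ_nonempty fun i => affineToL2 hν (u i)) := by
  let m : E → ℝ := Finset.univ.sup' Finset.univ_nonempty fun i => ⇑(u i)
  have u_le_m (i : ι) : ⇑(u i) ≤ m := Finset.le_sup' (fun i => ⇑(u i)) (Finset.mem_univ i)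
  have m_convex : ConvexOn ℝ Set.univ m :=
    Finset.sup'_induction _ _ (fun _ h₁ _ h₂ => h₁.sup h₂)
      fun i _ => convexOn_continuousAffineMap (u i)
  have m_cont : Continuous m :=
    Finset.sup'_induction _ _ (fun _ h₁ _ h₂ => h₁.sup h₂) fun i _ => (u i).continuous
  have integrable_u {κ : Measure E} [IsFiniteMeasure κ] (hκ : MemLp id 2 κ) (i : ι) :
      Integrable (u i) κ := (memLp_continuousAffineMap hκ (u i)).integrable one_le_two
  have integrable_m {κ : Measure E} [IsFiniteMeasure κ] (hκ : MemLp id 2 κ) : Integrable m κ :=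
    Finset.sup'_induction (p := (Integrable · κ)) _ _ (fun _ h₁ _ h₂ => h₁.sup h₂)
      fun i _ => integrable_u hκ i
  let φ : Lp ℝ 2 ν := Finset.univ.sup' Finset.univ_nonempty fun i => affineToL2 hν (u i)
  have m_le_φ : m ≤ᵐ[ν] φ := by
    have h_le (i : ι) : affineToL2 hν (u i) ≤ᵐ[ν] φ := (Lp.coeFn_le _ _).2
      (Finset.le_sup' (fun i => affineToL2 hν (u i)) (Finset.mem_univ i))
    filter_upwards [ae_all_iff.2 h_le, ae_all_iff.2 fun i =>
      (memLp_continuousAffineMap hν (u i)).coeFn_toLp] with x hx hu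
    exact (Finset.sup'_apply _ _ _).trans_le <|
      Finset.sup'_le _ _ fun i _ => (hu i).symm.trans_le (hx i)
  calc ∑ i, ∫ x, u i x ∂μ i
    _ ≤ ∑ i, ∫ x, m x ∂μ i := Finset.sum_le_sum fun i _ =>
        integral_mono (integrable_u (hμ i) i) (integrable_m (hμ i)) (u_le_m i)
    _ = ∫ x, m x ∂∑ i, μ i := (integral_finsetSum_measure fun i _ => integrable_m (hμ i)).symm
    _ ≤ ∫ x, m x ∂ν := h m m_convex m_cont
        (integrable_finsetSum_measure.2 fun i _ => integrable_m (hμ i)) (integrable_m hν)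
    _ ≤ ∫ x, φ x ∂ν :=
        integral_mono_ae (integrable_m hν) ((Lp.memLp φ).integrable one_le_two) m_le_φ
    _ = integralL2 ν φ := (integralL2_apply φ).symm

theorem exists_decomposition_of_convexOrder {μ : ι → Measure E} [∀ i, IsFiniteMeasure (μ i)]
    {ν : Measure E} [IsFiniteMeasure ν] (hμ : ∀ i, MemLp id 2 (μ i)) (hν : MemLp id 2 ν)
    (h : ContinuousConvexOrder (∑ i, μ i) ν) :
    ∃ κ : ι → Measure E, ∑ i, κ i = ν ∧ ∀ i (w : E →ᴬ[ℝ] ℝ), ∫ x, w x ∂κ i = ∫ x, w x ∂μ i := by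
  obtain ⟨g, g_mono, hgΛ, hgf⟩ := exists_sum_eq_comp_eq_of_le_sup'
    (Λ := (integralL2 ν).toLinearMap) monotone_integralL2 (fun _ : ι => affineToL2 hν)
    (fun i => (integralL2 (μ i)).toLinearMap ∘ₗ affineToL2 (hμ i)) fun u => by
      simpa [integralL2_affineToL2] using sum_integral_le_of_convexOrder hμ hν h u
  obtain ⟨κ, hκ_sum, hκ⟩ := exists_sum_measure_integral_eq_of_monotone g_mono hgΛ
  refine ⟨κ, hκ_sum, fun i w => ?_⟩
  rw [← integral_affineToL2 hν (hκ i).1, (hκ i).2, ← integralL2_affineToL2 (hμ i)]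
  exact congr($(hgf i) w)

end Decomposition

section Coupling

/-- `π` is a coupling of `α` and `β`: its marginals are `α` and `β`. -/
def IsCoupling {X Y : Type*} [MeasurableSpace X] [MeasurableSpace Y] (π : Measure (X × Y))
    (α : Measure X) (β : Measure Y) : Prop :=
  π.map Prod.fst = α ∧ π.map Prod.snd = β

namespace IsCoupling

variable {X Y : Type*} [MeasurableSpace X] [MeasurableSpace Y] {π : Measure (X × Y)}
  {α : Measure X} {β : Measure Y}

lemma measurePreserving_fst (h : IsCoupling π α β) : MeasurePreserving Prod.fst π α :=
  ⟨measurable_fst, h.1⟩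

lemma measurePreserving_snd (h : IsCoupling π α β) : MeasurePreserving Prod.snd π β :=
  ⟨measurable_snd, h.2⟩

lemma integral_comp_fst (h : IsCoupling π α β) {f : X → ℝ} (hf : AEStronglyMeasurable f α) :
    ∫ p, f p.1 ∂π = ∫ x, f x ∂α := by
  obtain ⟨rfl, -⟩ := h
  exact (integral_map measurable_fst.aemeasurable hf).symm

lemma integral_comp_snd (h : IsCoupling π α β) {f : Y → ℝ} (hf : AEStronglyMeasurable f β) :
    ∫ p, f p.2 ∂π = ∫ y, f y ∂β := by
  obtain ⟨-, rfl⟩ := h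
  exact (integral_map measurable_snd.aemeasurable hf).symm

lemma memLp_fst {E : Type*} [NormedAddCommGroup E] {p : ℝ≥0∞} {u : X → E} (h : IsCoupling π α β)
    (hu : MemLp u p α) : MemLp (fun q => u q.1) p π :=
  hu.comp_measurePreserving h.measurePreserving_fst

lemma memLp_snd {E : Type*} [NormedAddCommGroup E] {p : ℝ≥0∞} {u : Y → E} (h : IsCoupling π α β)
    (hu : MemLp u p β) : MemLp (fun q => u q.2) p π :=
  hu.comp_measurePreserving h.measurePreserving_snd

lemma prod [IsProbabilityMeasure α] [IsProbabilityMeasure β] : IsCoupling (α.prod β) α β :=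
  ⟨MeasureTheory.measurePreserving_fst.map_eq, MeasureTheory.measurePreserving_snd.map_eq⟩

end IsCoupling

lemma memLp_id_dirac {E : Type*} [NormedAddCommGroup E] [MeasurableSpace E]
    [MeasurableSingletonClass E] {p : ℝ≥0∞} (z : E) : MemLp id p (.dirac z) :=
  (memLp_const z).ae_eq (ae_eq_dirac id).symm

variable {E : Type*} [NormedAddCommGroup E] [InnerProductSpace ℝ E]

section L2

variable {X : Type*} [MeasurableSpace X] {μ : Measure X} {u v : X → E}

lemma inner_toLp_ae_eq (hu : MemLp u 2 μ) (hv : MemLp v 2 μ) :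
    (fun x => ⟪hu.toLp u x, hv.toLp v x⟫) =ᵐ[μ] fun x => ⟪u x, v x⟫ := by
  filter_upwards [hu.coeFn_toLp, hv.coeFn_toLp] with x hx hy
  rw [hx, hy]

lemma integrable_inner_of_memLp (hu : MemLp u 2 μ) (hv : MemLp v 2 μ) :
    Integrable (fun x => ⟪u x, v x⟫) μ :=
  (L2.integrable_inner (𝕜 := ℝ) _ _).congr (inner_toLp_ae_eq hu hv)

lemma integral_inner_le_eLpNorm_mul (hu : MemLp u 2 μ) (hv : MemLp v 2 μ) :
    ∫ x, ⟪u x, v x⟫ ∂μ ≤ (eLpNorm u 2 μ).toReal * (eLpNorm v 2 μ).toReal := by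
  rw [← integral_congr_ae (inner_toLp_ae_eq hu hv), ← L2.inner_def, ← Lp.norm_toLp u hu,
    ← Lp.norm_toLp v hv]
  exact real_inner_le_norm _ _

end L2

variable [MeasurableSpace E]

namespace IsCoupling

variable {Y : Type*} [MeasurableSpace Y] {α : Measure E} {β : Measure Y} {π : Measure (E × Y)}
  {u v : Y → E}

lemma integral_inner_comp_snd_le (h : IsCoupling π α β) (hα : MemLp id 2 α) (hu : MemLp u 2 β) :
    ∫ p, ⟪p.1, u p.2⟫ ∂π ≤ (eLpNorm id 2 α).toReal * (eLpNorm u 2 β).toReal := by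
  rw [← eLpNorm_comp_measurePreserving hα.1 h.measurePreserving_fst,
    ← eLpNorm_comp_measurePreserving hu.1 h.measurePreserving_snd]
  exact integral_inner_le_eLpNorm_mul (h.memLp_fst hα) (h.memLp_snd hu)

lemma integral_inner_comp_snd_le_add (h : IsCoupling π α β) (hα : MemLp id 2 α)
    (hu : MemLp u 2 β) (hv : MemLp v 2 β) :
    ∫ p, ⟪p.1, u p.2⟫ ∂π ≤
      ∫ p, ⟪p.1, v p.2⟫ ∂π + (eLpNorm id 2 α).toReal * (eLpNorm (u - v) 2 β).toReal := by
  have h_inner {w : Y → E} (hw : MemLp w 2 β) : Integrable (fun p => ⟪p.1, w p.2⟫) π :=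
    integrable_inner_of_memLp (h.memLp_fst hα) (h.memLp_snd hw)
  rw [← sub_le_iff_le_add', ← integral_sub (h_inner hu) (h_inner hv)]
  simpa only [Pi.sub_apply, inner_sub_right] using h.integral_inner_comp_snd_le hα (hu.sub hv)

end IsCoupling

variable {α β : Measure E} {π : Measure (E × E)}

/-- The squared `2`-Wasserstein distance. -/
def wassersteinSq (α β : Measure E) : ℝ :=
  sInf {r : ℝ | ∃ π, IsCoupling π α β ∧ r = ∫ p, ‖p.1 - p.2‖ ^ 2 ∂π}

/-- The maximal correlation `sup_π ∫ ⟪x, y⟫ dπ` over the couplings `π` of two measures, in terms of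
which `W₂²` becomes a maximization problem. -/
def maxCorrelation (α β : Measure E) : ℝ :=
  sSup {r : ℝ | ∃ π, IsCoupling π α β ∧ r = ∫ p, ⟪p.1, p.2⟫ ∂π}

namespace IsCoupling

lemma integrable_inner (h : IsCoupling π α β) (hα : MemLp id 2 α) (hβ : MemLp id 2 β) :
    Integrable (fun p : E × E => ⟪p.1, p.2⟫) π :=
  integrable_inner_of_memLp (h.memLp_fst hα) (h.memLp_snd hβ)

lemma integral_norm_sub_sq (h : IsCoupling π α β) (hα : MemLp id 2 α) (hβ : MemLp id 2 β) :
    ∫ p, ‖p.1 - p.2‖ ^ 2 ∂π =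
      ∫ x, ‖x‖ ^ 2 ∂α + ∫ y, ‖y‖ ^ 2 ∂β - 2 * ∫ p, ⟪p.1, p.2⟫ ∂π := by
  have h_fst : Integrable (fun p => ‖p.1‖ ^ 2) π :=
    (h.memLp_fst hα).integrable_norm_pow two_ne_zero
  have h_snd : Integrable (fun p => ‖p.2‖ ^ 2) π :=
    (h.memLp_snd hβ).integrable_norm_pow two_ne_zero
  have h_inner := (h.integrable_inner hα hβ).const_mul 2
  have h_sub : Integrable (fun p => ‖p.1‖ ^ 2 - 2 * ⟪p.1, p.2⟫) π := h_fst.sub h_inner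
  simp only [norm_sub_sq_real]
  rw [integral_add h_sub h_snd, integral_sub h_fst h_inner, integral_const_mul,
    h.integral_comp_fst (f := (‖·‖ ^ 2)) (hα.1.norm.pow 2),
    h.integral_comp_snd (f := (‖·‖ ^ 2)) (hβ.1.norm.pow 2)]
  ring

lemma integral_inner_le_maxCorrelation (h : IsCoupling π α β) (hα : MemLp id 2 α)
    (hβ : MemLp id 2 β) : ∫ p, ⟪p.1, p.2⟫ ∂π ≤ maxCorrelation α β := by
  refine le_csSup ⟨(eLpNorm id 2 α).toReal * (eLpNorm id 2 β).toReal, ?_⟩ ⟨π, h, rfl⟩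
  rintro _ ⟨π', h', rfl⟩
  exact h'.integral_inner_comp_snd_le hα hβ

lemma inner_ae_eq_of_dirac {z : E} [MeasurableSingletonClass E]
    (h : IsCoupling π α (.dirac z)) : (fun p => ⟪p.1, p.2⟫) =ᵐ[π] fun p => ⟪p.1, z⟫ := by
  have h_snd : ∀ᵐ y ∂π.map Prod.snd, y = z := by rw [h.2, ae_dirac_eq]; rfl
  filter_upwards [ae_of_ae_map measurable_snd.aemeasurable h_snd] with p hp
  rw [hp]

end IsCoupling

lemma integral_inner_le_maxCorrelation_map {T : E → E} (hT : Measurable T) (hα : MemLp id 2 α)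
    (hTα : MemLp id 2 (α.map T)) : ∫ x, ⟪x, T x⟫ ∂α ≤ maxCorrelation α (α.map T) := by
  have h_graph : IsCoupling (α.map fun x => (x, T x)) α (α.map T) :=
    ⟨by rw [Measure.map_map measurable_fst (by fun_prop)]; exact Measure.map_id,
      by rw [Measure.map_map measurable_snd (by fun_prop)]; rfl⟩
  exact (integral_map (by fun_prop) (h_graph.integrable_inner hα hTα).1).ge.trans
    (h_graph.integral_inner_le_maxCorrelation hα hTα)

variable [IsProbabilityMeasure α] [IsProbabilityMeasure β]

lemma maxCorrelation_le {c : ℝ} (h : ∀ π, IsCoupling π α β → ∫ p, ⟪p.1, p.2⟫ ∂π ≤ c) :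
    maxCorrelation α β ≤ c :=
  csSup_le ⟨_, _, .prod, rfl⟩ <| by rintro _ ⟨π, hπ, rfl⟩; exact h π hπ

lemma maxCorrelation_le_integral_add (hα : MemLp id 2 α) (hβ : MemLp id 2 β) {φ ψ : E → ℝ}
    (hφ : Integrable φ α) (hψ : Integrable ψ β) (h : ∀ᵐ y ∂β, ∀ x, ⟪x, y⟫ ≤ φ x + ψ y) :
    maxCorrelation α β ≤ ∫ x, φ x ∂α + ∫ y, ψ y ∂β := by
  refine maxCorrelation_le fun π hπ => ?_
  have hφπ : Integrable (fun p => φ p.1) π :=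
    hπ.measurePreserving_fst.integrable_comp_of_integrable hφ
  have hψπ : Integrable (fun p => ψ p.2) π :=
    hπ.measurePreserving_snd.integrable_comp_of_integrable hψ
  rw [← hπ.integral_comp_fst hφ.1, ← hπ.integral_comp_snd hψ.1, ← integral_add hφπ hψπ]
  refine integral_mono_ae (hπ.integrable_inner hα hβ) (hφπ.add hψπ) ?_
  filter_upwards [hπ.measurePreserving_snd.quasiMeasurePreserving.ae h] with p hp
  exact hp p.1

lemma maxCorrelation_dirac [MeasurableSingletonClass E] (hα : MemLp id 2 α) (z : E) :
    maxCorrelation α (.dirac z) = ∫ x, ⟪x, z⟫ ∂α := by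
  have h_eq {π : Measure (E × E)} (h : IsCoupling π α (.dirac z)) :
      ∫ p, ⟪p.1, p.2⟫ ∂π = ∫ x, ⟪x, z⟫ ∂α := by
    rw [integral_congr_ae h.inner_ae_eq_of_dirac, h.integral_comp_fst (f := (⟪·, z⟫))]
    exact (integrable_inner_of_memLp hα (memLp_const z)).1
  refine le_antisymm (maxCorrelation_le fun π h => (h_eq h).le) ?_
  rw [← h_eq .prod]
  exact IsCoupling.prod.integral_inner_le_maxCorrelation hα (memLp_id_dirac z)

lemma wassersteinSq_eq (hα : MemLp id 2 α) (hβ : MemLp id 2 β) :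
    wassersteinSq α β = ∫ x, ‖x‖ ^ 2 ∂α + ∫ y, ‖y‖ ^ 2 ∂β - 2 * maxCorrelation α β := by
  let cost (r : ℝ) : ℝ := ∫ x, ‖x‖ ^ 2 ∂α + ∫ y, ‖y‖ ^ 2 ∂β - 2 * r
  have cost_anti : Antitone cost := fun r s h => by simp only [cost]; linarith
  have cost_cont : Continuous cost := by fun_prop
  let correlations : Set ℝ := {r | ∃ π, IsCoupling π α β ∧ r = ∫ p, ⟪p.1, p.2⟫ ∂π}
  have h_nonempty : correlations.Nonempty := ⟨_, _, .prod, rfl⟩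
  have h_bdd : BddAbove correlations := ⟨maxCorrelation α β, by
    rintro _ ⟨π, h, rfl⟩; exact h.integral_inner_le_maxCorrelation hα hβ⟩
  refine .trans ?_
    (cost_anti.map_csSup_of_continuousAt cost_cont.continuousAt h_nonempty h_bdd).symm
  refine congrArg sInf (Set.ext fun r => ⟨?_, ?_⟩)
  · rintro ⟨π, h, rfl⟩
    exact ⟨_, ⟨π, h, rfl⟩, (h.integral_norm_sub_sq hα hβ).symm⟩
  · rintro ⟨_, ⟨π, h, rfl⟩, rfl⟩
    exact ⟨π, h, (h.integral_norm_sub_sq hα hβ).symm⟩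

end Coupling

section Gluing

variable {X Y : Type*} [MeasurableSpace X] [MeasurableSpace Y]

namespace IsCoupling

lemma sum {ι : Type*} [Fintype ι] {π : ι → Measure (X × Y)} {α : ι → Measure X} {β : ι → Measure Y}
    (h : ∀ i, IsCoupling (π i) (α i) (β i)) : IsCoupling (∑ i, π i) (∑ i, α i) (∑ i, β i) :=
  ⟨(Measure.map_finset_sum' measurable_fst.aemeasurable).trans
      (Finset.sum_congr rfl fun i _ => (h i).1),
    (Measure.map_finset_sum' measurable_snd.aemeasurable).trans
      (Finset.sum_congr rfl fun i _ => (h i).2)⟩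

lemma univ_eq {π : Measure (X × Y)} {α : Measure X} {β : Measure Y} (h : IsCoupling π α β) :
    α Set.univ = β Set.univ := by
  rw [← h.1, ← h.2, Measure.map_apply measurable_fst .univ, Measure.map_apply measurable_snd .univ,
    Set.preimage_univ, Set.preimage_univ]

lemma restrict_snd {π : Measure (X × Y)} {α : Measure X} {β : Measure Y} (h : IsCoupling π α β)
    {A : Set Y} (hA : MeasurableSet A) :
    IsCoupling (π.restrict (Prod.snd ⁻¹' A)) ((π.restrict (Prod.snd ⁻¹' A)).map Prod.fst)
      (β.restrict A) :=
  ⟨rfl, by rw [← h.2, Measure.restrict_map measurable_snd hA]⟩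

end IsCoupling

lemma exists_isCoupling_of_univ_eq {α : Measure X} {β : Measure Y} [IsFiniteMeasure α]
    [IsFiniteMeasure β] (h : α Set.univ = β Set.univ) : ∃ π, IsCoupling π α β := by
  rcases eq_or_ne (α Set.univ) 0 with h_zero | h_zero
  · rw [Measure.measure_univ_eq_zero.1 h_zero, Measure.measure_univ_eq_zero.1 (h.symm.trans h_zero)]
    exact ⟨0, Measure.map_zero _, Measure.map_zero _⟩
  · have h_cancel : (α Set.univ)⁻¹ * α Set.univ = 1 :=
      ENNReal.inv_mul_cancel h_zero (measure_ne_top α _)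
    refine ⟨(α Set.univ)⁻¹ • α.prod β, ?_, ?_⟩
    · rw [Measure.map_smul, Measure.map_fst_prod, ← h, smul_smul, h_cancel, one_smul]
    · rw [Measure.map_smul, Measure.map_snd_prod, smul_smul, h_cancel, one_smul]

variable {ι : Type*} [Fintype ι]

lemma sum_restrict_preimage_singleton [MeasurableSpace ι] [MeasurableSingletonClass ι]
    (μ : Measure X) {c : X → ι} (hc : Measurable c) : ∑ i, μ.restrict (c ⁻¹' {i}) = μ := by
  have h_univ : ⋃ i, c ⁻¹' {i} = Set.univ := Set.iUnion_eq_univ_iff.2 fun x => ⟨c x, rfl⟩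
  have h_disjoint : Pairwise (Function.onFun Disjoint fun i => c ⁻¹' {i}) := fun _ _ h =>
    (Set.disjoint_singleton.2 h).preimage c
  rw [← Measure.sum_fintype, ← Measure.restrict_iUnion h_disjoint
    fun i => hc (measurableSet_singleton i), h_univ, Measure.restrict_univ]

lemma IsCoupling.integral_sum_eq {γ : ι → Measure (X × Y)} {α : ι → Measure X} {β : ι → Measure Y}
    (h : ∀ i, IsCoupling (γ i) (α i) (β i)) {c : Y → ι} (hc : ∀ i, ∀ᵐ y ∂β i, c y = i)
    {F : ι → X → ℝ} (hF : ∀ i, Integrable (F i) (α i)) :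
    ∫ p, F (c p.2) p.1 ∂∑ i, γ i = ∑ i, ∫ x, F i x ∂α i := by
  have h_ae (i : ι) : (fun p => F (c p.2) p.1) =ᵐ[γ i] fun p => F i p.1 := by
    filter_upwards [(h i).measurePreserving_snd.quasiMeasurePreserving.ae (hc i)] with p hp
    rw [hp]
  rw [integral_finsetSum_measure fun i _ =>
    ((h i).measurePreserving_fst.integrable_comp_of_integrable (hF i)).congr (h_ae i).symm]
  exact Finset.sum_congr rfl fun i _ =>
    (integral_congr_ae (h_ae i)).trans ((h i).integral_comp_fst (hF i).1)

end Gluing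

section Forward

variable {E Y : Type*} [NormedAddCommGroup E] [MeasurableSpace E] [MeasurableSpace Y]

theorem exists_isCoupling_integral_eq_of_convexOrder [NormedSpace ℝ E] {μ ν : Measure E}
    [IsFiniteMeasure μ] [IsFiniteMeasure ν] {ρ : Measure Y} {π : Measure (E × Y)}
    (hμ : MemLp id 2 μ) (hν : MemLp id 2 ν) (h : ContinuousConvexOrder μ ν)
    (hπ : IsCoupling π μ ρ) {ι : Type*} [Finite ι] [Nonempty ι] [MeasurableSpace ι]
    [MeasurableSingletonClass ι] {c : Y → ι} (hc : Measurable c) :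
    ∃ π', IsCoupling π' ν ρ ∧
      ∀ w : ι → E →ᴬ[ℝ] ℝ, ∫ p, w (c p.2) p.1 ∂π' = ∫ p, w (c p.2) p.1 ∂π := by
  cases nonempty_fintype ι
  have : IsFiniteMeasure (π.map Prod.fst) := hπ.1 ▸ inferInstance
  have : IsFiniteMeasure π := Measure.isFiniteMeasure_of_map measurable_fst.aemeasurable
  have h_meas (i : ι) : MeasurableSet (c ⁻¹' {i}) := hc (measurableSet_singleton i)
  let γ (i : ι) : Measure (E × Y) := π.restrict (Prod.snd ⁻¹' (c ⁻¹' {i}))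
  have hγ_sum : ∑ i, γ i = π := sum_restrict_preimage_singleton π (hc.comp measurable_snd)
  have hγ (i : ι) : IsCoupling (γ i) ((γ i).map Prod.fst) (ρ.restrict (c ⁻¹' {i})) :=
    hπ.restrict_snd (h_meas i)
  have hρ_sum : ∑ i, ρ.restrict (c ⁻¹' {i}) = ρ := sum_restrict_preimage_singleton ρ hc
  have hμ_sum : ∑ i, (γ i).map Prod.fst = μ := by
    rw [← (IsCoupling.sum hγ).1, hγ_sum, hπ.1]
  have hγ_memLp (i : ι) : MemLp id 2 ((γ i).map Prod.fst) := hμ.mono_measure <|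
    (Measure.map_mono Measure.restrict_le_self measurable_fst).trans_eq hπ.1
  obtain ⟨κ, hκ_sum, hκ⟩ := exists_decomposition_of_convexOrder hγ_memLp hν (hμ_sum ▸ h)
  have hκ_le (i : ι) : κ i ≤ ν := hκ_sum ▸ Measure.sum_fintype κ ▸ Measure.le_sum κ i
  have hκ_finite (i : ι) : IsFiniteMeasure (κ i) := isFiniteMeasure_of_le ν (hκ_le i)
  have hκ_memLp (i : ι) : MemLp id 2 (κ i) := hν.mono_measure (hκ_le i)
  have h_mass (i : ι) : κ i Set.univ = ρ.restrict (c ⁻¹' {i}) Set.univ := by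
    rw [← (hγ i).univ_eq, ← measureReal_eq_measureReal_iff]
    simpa using hκ i (ContinuousAffineMap.const ℝ E 1)
  have : IsFiniteMeasure ρ := ⟨by rw [← hπ.univ_eq]; exact measure_lt_top μ _⟩
  choose γ' hγ' using fun i => exists_isCoupling_of_univ_eq (h_mass i)
  have h_label (i : ι) : ∀ᵐ y ∂ρ.restrict (c ⁻¹' {i}), c y = i :=
    ae_restrict_mem (h_meas i)
  have integrable_w {α : Measure E} [IsFiniteMeasure α] (hα : MemLp id 2 α) (w : E →ᴬ[ℝ] ℝ) :
      Integrable w α := (memLp_continuousAffineMap hα w).integrable one_le_two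
  refine ⟨∑ i, γ' i, hκ_sum ▸ hρ_sum ▸ IsCoupling.sum hγ', fun w => ?_⟩
  rw [IsCoupling.integral_sum_eq (F := fun i => w i) hγ' h_label
      fun i => integrable_w (hκ_memLp i) (w i), ← hγ_sum,
    IsCoupling.integral_sum_eq (F := fun i => w i) hγ h_label
      fun i => integrable_w (hγ_memLp i) (w i)]
  exact Finset.sum_congr rfl fun i _ => hκ i (w i)

variable [InnerProductSpace ℝ E]

lemma exists_isCoupling_integral_inner_simpleFunc_eq [MeasurableSingletonClass E]
    [Nonempty Y] {μ ν : Measure E} [IsFiniteMeasure μ] [IsFiniteMeasure ν] {ρ : Measure Y}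
    {π : Measure (E × Y)} (hμ : MemLp id 2 μ) (hν : MemLp id 2 ν)
    (h : ContinuousConvexOrder μ ν) (hπ : IsCoupling π μ ρ) (g : SimpleFunc Y E) :
    ∃ π', IsCoupling π' ν ρ ∧ ∫ p, ⟪p.1, g p.2⟫ ∂π' = ∫ p, ⟪p.1, g p.2⟫ ∂π := by
  let c (y : Y) : g.range := ⟨g y, g.mem_range_self y⟩
  have : Nonempty g.range := Nonempty.map c ‹_›
  obtain ⟨π', hπ', h_eq⟩ := exists_isCoupling_integral_eq_of_convexOrder hμ hν h hπ
    (c := c) g.measurable.subtype_mk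
  refine ⟨π', hπ', ?_⟩
  simpa [c, real_inner_comm] using h_eq fun y => (innerSL ℝ (y : E)).toContinuousAffineMap

theorem maxCorrelation_le_of_convexOrder [MeasurableSingletonClass E] {μ ν ρ : Measure E}
    [IsProbabilityMeasure μ] [IsProbabilityMeasure ν] [IsProbabilityMeasure ρ]
    (hμ : MemLp id 2 μ) (hν : MemLp id 2 ν) (hρ : MemLp id 2 ρ)
    (h : ContinuousConvexOrder μ ν) : maxCorrelation μ ρ ≤ maxCorrelation ν ρ := by
  refine maxCorrelation_le fun π hπ => le_of_forall_pos_le_add fun ε hε => ?_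
  let K : ℝ := (eLpNorm id 2 μ).toReal + (eLpNorm id 2 ν).toReal
  let δ : ℝ := ε / (K + 1)
  have δ_pos : 0 < δ := div_pos hε (by positivity)
  obtain ⟨g, hg_lt, hg⟩ := hρ.exists_simpleFunc_eLpNorm_sub_lt ENNReal.ofNat_ne_top
    (ENNReal.ofReal_pos.2 δ_pos).ne'
  have hg_le : (eLpNorm (id - ⇑g) 2 ρ).toReal ≤ δ :=
    ENNReal.toReal_le_of_le_ofReal δ_pos.le hg_lt.le
  obtain ⟨π', hπ', h_eq⟩ := exists_isCoupling_integral_inner_simpleFunc_eq hμ hν h hπ g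
  calc ∫ p, ⟪p.1, p.2⟫ ∂π
    _ ≤ ∫ p, ⟪p.1, g p.2⟫ ∂π + (eLpNorm id 2 μ).toReal * (eLpNorm (id - ⇑g) 2 ρ).toReal :=
        hπ.integral_inner_comp_snd_le_add hμ hρ hg
    _ = ∫ p, ⟪p.1, g p.2⟫ ∂π' + (eLpNorm id 2 μ).toReal * (eLpNorm (id - ⇑g) 2 ρ).toReal := by
        rw [h_eq]
    _ ≤ ∫ p, ⟪p.1, p.2⟫ ∂π' + K * (eLpNorm (id - ⇑g) 2 ρ).toReal := by
        have := hπ'.integral_inner_comp_snd_le_add hν hg hρ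
        rw [eLpNorm_sub_comm] at this
        simp only [K, id] at this ⊢
        linarith
    _ ≤ maxCorrelation ν ρ + K * δ := by
        gcongr
        exact hπ'.integral_inner_le_maxCorrelation hν hρ
    _ ≤ maxCorrelation ν ρ + ε := by
        gcongr
        rw [mul_div_left_comm]
        exact mul_le_of_le_one_right hε.le ((div_le_one (by positivity)).2 (by simp))

end Forward

section Backward

lemma exists_simpleFunc_argmax {X V : Type*} [MeasurableSpace X] {F : V → X → ℝ}
    (hF : ∀ v, Measurable (F v)) {s : Finset V} (hs : s.Nonempty) :
    ∃ S : SimpleFunc X V, (∀ x, S x ∈ s) ∧ ∀ x, ∀ v ∈ s, F v x ≤ F (S x) x := by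
  induction hs using Finset.Nonempty.cons_induction with
  | singleton a => exact ⟨.const X a, by simp⟩
  | cons a s _ _ ih =>
    obtain ⟨S, hS_mem, hS_max⟩ := ih
    refine ⟨.piecewise {x | F (S x) x ≤ F a x}
      (measurableSet_le (S.measurable_bind F hF) (hF a)) (.const X a) S, fun x => ?_,
      fun x v hv => ?_⟩
    · rw [SimpleFunc.piecewise_apply, Finset.mem_cons]
      split_ifs
      exacts [.inl rfl, .inr (hS_mem x)]
    · rw [SimpleFunc.piecewise_apply]
      split_ifs with hx <;> rcases Finset.mem_cons.1 hv with rfl | hv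
      exacts [le_rfl, (hS_max x v hv).trans hx, (not_le.1 hx).le, hS_max x v hv]

lemma ae_mem_range_map_simpleFunc {X V : Type*} [MeasurableSpace X] [MeasurableSpace V]
    [MeasurableSingletonClass V] (μ : Measure X) (S : SimpleFunc X V) :
    ∀ᵐ v ∂μ.map S, v ∈ S.range :=
  (ae_map_iff S.aemeasurable S.range.measurableSet).2 (.of_forall S.mem_range_self)

lemma aemeasurable_map_simpleFunc {X V : Type*} [MeasurableSpace X] [MeasurableSpace V]
    [MeasurableSingletonClass V] (μ : Measure X) (S : SimpleFunc X V) (b : V → ℝ) :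
    AEMeasurable b (μ.map S) := by
  rw [← Measure.restrict_eq_self_of_ae_mem (ae_mem_range_map_simpleFunc μ S)]
  exact aemeasurable_restrict_of_measurable_subtype S.range.measurableSet
    (measurable_of_countable _)

variable {E : Type*} [NormedAddCommGroup E] [InnerProductSpace ℝ E]

/- `b` is the negative of the convex conjugate of `f`; it depends only on the slope, whereas the
same slope may occur several times in a sequence of affine minorants. -/
lemma exists_isLUB_inner_add [CompleteSpace E] [SecondCountableTopology E] {f : E → ℝ}
    (hf : ConvexOn ℝ Set.univ f) (hfc : Continuous f) :
    ∃ (a : ℕ → E) (b : E → ℝ), ∀ x, IsLUB (Set.range fun i => ⟪x, a i⟫ + b (a i)) (f x) := by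
  obtain ⟨l, c, h_minorant, h_sup⟩ := hf.real_univ_sSup_of_nat_affine_eq hfc.lowerSemicontinuous
  let a (i : ℕ) : E := (InnerProductSpace.toDual ℝ E).symm (l i)
  have inner_a (i : ℕ) (x : E) : ⟪x, a i⟫ = l i x := by rw [real_inner_comm]; simp [a]
  let b (y : E) : ℝ := ⨅ x, f x - ⟪x, y⟫
  have c_le (i : ℕ) (x : E) : c i ≤ f x - ⟪x, a i⟫ := by
    rw [inner_a, le_sub_iff_add_le']
    exact h_minorant i x
  have b_le (i : ℕ) (x : E) : b (a i) ≤ f x - ⟪x, a i⟫ :=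
    ciInf_le ⟨c i, Set.forall_mem_range.2 (c_le i)⟩ x
  refine ⟨a, b, fun x => ⟨Set.forall_mem_range.2 fun i => le_sub_iff_add_le'.1 (b_le i x),
    fun u hu => ?_⟩⟩
  rw [← h_sup, iSup_apply]
  refine ciSup_le fun i => ?_
  calc l i x + c i
    _ ≤ ⟪x, a i⟫ + b (a i) := by rw [inner_a]; gcongr; exact le_ciInf (c_le i)
    _ ≤ u := hu ⟨i, rfl⟩

variable [MeasurableSpace E]

lemma integrable_inner_simpleFunc_add {μ : Measure E} [IsFiniteMeasure μ]
    (hμ : MemLp id 2 μ) (S : SimpleFunc E E) (b : E → ℝ) :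
    Integrable (fun x => ⟪x, S x⟫ + b (S x)) μ :=
  (integrable_inner_of_memLp hμ (S.memLp_of_isFiniteMeasure 2 μ)).add
    (S.map b).integrable_of_isFiniteMeasure

variable [BorelSpace E] [SecondCountableTopology E]

lemma exists_simpleFunc_monotone_tendsto {f : E → ℝ} {a : ℕ → E} {b : E → ℝ}
    (h : ∀ x, IsLUB (Set.range fun i => ⟪x, a i⟫ + b (a i)) (f x)) :
    ∃ S : ℕ → SimpleFunc E E,
      (∀ n x x', ⟪x, S n x'⟫ + b (S n x') ≤ ⟪x, S n x⟫ + b (S n x)) ∧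
      (∀ x, Monotone fun n => ⟪x, S n x⟫ + b (S n x)) ∧
      ∀ x, Filter.Tendsto (fun n => ⟪x, S n x⟫ + b (S n x)) Filter.atTop (nhds (f x)) := by
  classical
  let s (n : ℕ) : Finset E := (Finset.range (n + 1)).image a
  have s_mono : Monotone s := fun m n h => Finset.image_mono _ (by gcongr)
  have mem_s (n : ℕ) : a n ∈ s n := Finset.mem_image_of_mem a (Finset.self_mem_range_succ n)
  choose S hS_mem hS_max using fun n => exists_simpleFunc_argmax
    (F := fun v x => ⟪x, v⟫ + b v) (fun v => by fun_prop) ⟨a n, mem_s n⟩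
  have h_mono (x : E) : Monotone fun n => ⟪x, S n x⟫ + b (S n x) := fun m n h =>
    hS_max n x _ (s_mono h (hS_mem m x))
  refine ⟨S, fun n x x' => hS_max n x _ (hS_mem n x'), h_mono, fun x =>
    tendsto_atTop_isLUB (h_mono x) ⟨Set.forall_mem_range.2 fun n => ?_, fun u hu => ?_⟩⟩
  · obtain ⟨i, -, hi⟩ := Finset.mem_image.1 (hS_mem n x)
    rw [← hi]
    exact (h x).1 ⟨i, rfl⟩
  · exact (h x).2 <| Set.forall_mem_range.2 fun i =>
      (hS_max i x _ (mem_s i)).trans (hu ⟨i, rfl⟩)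

variable {μ ν : Measure E} [IsProbabilityMeasure μ] [IsProbabilityMeasure ν]

lemma integral_inner_simpleFunc_add_le {S : SimpleFunc E E} {b : E → ℝ} (hμ : MemLp id 2 μ)
    (hν : MemLp id 2 ν) (hS : ∀ x x', ⟪x, S x'⟫ + b (S x') ≤ ⟪x, S x⟫ + b (S x))
    (h : maxCorrelation μ (μ.map S) ≤ maxCorrelation ν (μ.map S)) :
    ∫ x, (⟪x, S x⟫ + b (S x)) ∂μ ≤ ∫ x, (⟪x, S x⟫ + b (S x)) ∂ν := by
  have : IsProbabilityMeasure (μ.map S) := Measure.isProbabilityMeasure_map S.aemeasurable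
  have hS_memLp : MemLp S 2 μ := S.memLp_of_isFiniteMeasure 2 μ
  have hρ : MemLp id 2 (μ.map S) :=
    (memLp_map_measure_iff aestronglyMeasurable_id S.aemeasurable).2 hS_memLp
  have hb_meas := (aemeasurable_map_simpleFunc μ S b).aestronglyMeasurable
  have hbS : Integrable (fun x => b (S x)) μ := (S.map b).integrable_of_isFiniteMeasure
  have hb : Integrable b (μ.map S) := (integrable_map_measure hb_meas S.aemeasurable).2 hbS
  have h_range : ∀ᵐ y ∂μ.map S, ∀ x, ⟪x, y⟫ ≤ (⟪x, S x⟫ + b (S x)) + -b y := by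
    filter_upwards [ae_mem_range_map_simpleFunc μ S] with _ hy x
    obtain ⟨x', rfl⟩ := SimpleFunc.mem_range.1 hy
    exact le_add_neg_iff_add_le.2 (hS x x')
  calc ∫ x, (⟪x, S x⟫ + b (S x)) ∂μ
    _ = ∫ x, ⟪x, S x⟫ ∂μ + ∫ x, b (S x) ∂μ :=
        integral_add (integrable_inner_of_memLp hμ hS_memLp) hbS
    _ ≤ maxCorrelation μ (μ.map S) + ∫ y, b y ∂μ.map S := by
        rw [integral_map S.aemeasurable hb_meas]
        gcongr
        exact integral_inner_le_maxCorrelation_map S.measurable hμ hρ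
    _ ≤ maxCorrelation ν (μ.map S) + ∫ y, b y ∂μ.map S := by gcongr
    _ ≤ ∫ x, (⟪x, S x⟫ + b (S x)) ∂ν := by
        rw [← le_sub_iff_add_le, sub_eq_add_neg, ← integral_neg]
        exact maxCorrelation_le_integral_add hν hρ (integrable_inner_simpleFunc_add hν S b) hb.neg
          h_range

theorem continuousConvexOrder_of_maxCorrelation_le [CompleteSpace E] (hμ : MemLp id 2 μ)
    (hν : MemLp id 2 ν)
    (h : ∀ S : SimpleFunc E E, maxCorrelation μ (μ.map S) ≤ maxCorrelation ν (μ.map S)) :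
    ContinuousConvexOrder μ ν := by
  intro f hf hfc hfμ hfν
  obtain ⟨a, b, h_lub⟩ := exists_isLUB_inner_add hf hfc
  obtain ⟨S, hS, h_mono, h_tendsto⟩ := exists_simpleFunc_monotone_tendsto h_lub
  refine le_of_tendsto_of_tendsto'
    (integral_tendsto_of_tendsto_of_monotone (fun n => integrable_inner_simpleFunc_add hμ (S n) b)
      hfμ (.of_forall h_mono) (.of_forall h_tendsto))
    (integral_tendsto_of_tendsto_of_monotone (fun n => integrable_inner_simpleFunc_add hν (S n) b)
      hfν (.of_forall h_mono) (.of_forall h_tendsto))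
    fun n => integral_inner_simpleFunc_add_le hμ hν (hS n) (h (S n))

end Backward

section CharacterizationByDistance

variable {E : Type*} [NormedAddCommGroup E] [MeasurableSpace E]

lemma exists_map_simpleFunc_compl_closedBall_eq_zero {X : Type*} [MeasurableSpace X]
    [OpensMeasurableSpace E] (μ : Measure X) (S : SimpleFunc X E) :
    ∃ R : ℝ, μ.map S (closedBall 0 R)ᶜ = 0 := by
  obtain ⟨R, hR⟩ := S.exists_forall_norm_le
  refine ⟨R, mem_ae_iff.1 ?_⟩
  exact (ae_map_iff S.aemeasurable measurableSet_closedBall).2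
    (.of_forall fun x => mem_closedBall_zero_iff.2 (hR x))

variable [BorelSpace E] [SecondCountableTopology E]

lemma memLp_id_of_measure_compl_closedBall {p : ℝ≥0∞} {ρ : Measure E} [IsFiniteMeasure ρ] {R : ℝ}
    (h : ρ (closedBall 0 R)ᶜ = 0) : MemLp id p ρ := by
  refine .of_bound aestronglyMeasurable_id R ?_
  filter_upwards [mem_ae_iff.2 h] with x hx
  exact mem_closedBall_zero_iff.1 hx

variable [InnerProductSpace ℝ E] {μ ν : Measure E} [IsProbabilityMeasure μ] [IsProbabilityMeasure ν]

lemma wassersteinSq_sub_le_sub_iff {ρ : Measure E} [IsProbabilityMeasure ρ] (hμ : MemLp id 2 μ)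
    (hν : MemLp id 2 ν) (hρ : MemLp id 2 ρ) (z : E) :
    wassersteinSq ν ρ - wassersteinSq μ ρ ≤
        wassersteinSq ν (Measure.dirac z) - wassersteinSq μ (Measure.dirac z) ↔
      maxCorrelation μ ρ - ∫ x, ⟪x, z⟫ ∂μ ≤ maxCorrelation ν ρ - ∫ x, ⟪x, z⟫ ∂ν := by
  rw [wassersteinSq_eq hν hρ, wassersteinSq_eq hμ hρ, wassersteinSq_eq hν (memLp_id_dirac z),
    wassersteinSq_eq hμ (memLp_id_dirac z), maxCorrelation_dirac hμ, maxCorrelation_dirac hν]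
  constructor <;> intro h <;> linarith

theorem stmt3_general [CompleteSpace E] (hμ : Integrable (fun x => ‖x‖ ^ 2) μ)
    (hν : Integrable (fun y => ‖y‖ ^ 2) ν) :
    ContinuousConvexOrder μ ν ↔
      ∀ ρ : Measure E, IsProbabilityMeasure ρ → (∃ R : ℝ, ρ (closedBall (0 : E) R)ᶜ = 0) →
        ∀ z : E, wassersteinSq ν ρ - wassersteinSq μ ρ ≤
          wassersteinSq ν (Measure.dirac z) - wassersteinSq μ (Measure.dirac z) := by
  replace hμ : MemLp id 2 μ := (memLp_two_iff_integrable_sq_norm aestronglyMeasurable_id).2 hμ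
  replace hν : MemLp id 2 ν := (memLp_two_iff_integrable_sq_norm aestronglyMeasurable_id).2 hν
  constructor
  · intro h ρ _ ⟨R, hR⟩ z
    have hρ : MemLp id 2 ρ := memLp_id_of_measure_compl_closedBall hR
    have mean_eq : ∫ x, ⟪x, z⟫ ∂μ = ∫ x, ⟪x, z⟫ ∂ν := by
      simpa [real_inner_comm] using h.integral_continuousAffineMap_eq (hμ.mono_exponent one_le_two)
        (hν.mono_exponent one_le_two) (innerSL ℝ z).toContinuousAffineMap
    rw [wassersteinSq_sub_le_sub_iff hμ hν hρ, mean_eq]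
    gcongr
    exact maxCorrelation_le_of_convexOrder hμ hν hρ h
  · intro h
    refine continuousConvexOrder_of_maxCorrelation_le hμ hν fun S => ?_
    have : IsProbabilityMeasure (μ.map S) := Measure.isProbabilityMeasure_map S.aemeasurable
    obtain ⟨R, hR⟩ := exists_map_simpleFunc_compl_closedBall_eq_zero μ S
    have hρ : MemLp id 2 (μ.map S) := memLp_id_of_measure_compl_closedBall hR
    simpa using (wassersteinSq_sub_le_sub_iff hμ hν hρ 0).1 (h _ this ⟨R, hR⟩ 0)

end CharacterizationByDistance

lemma convexOrder_iff_continuousConvexOrder {d : ℕ} {μ ν : Measure (EuclideanSpace ℝ (Fin d))} :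
    ConvexOrder μ ν ↔ ContinuousConvexOrder μ ν :=
  ⟨fun h f hf _ => h f hf, fun h f hf =>
    h f hf (continuousOn_univ.1 (hf.continuousOn isOpen_univ))⟩

theorem stmt3 (d : ℕ) (hd : 1 ≤ d)
    (μ ν : Measure (EuclideanSpace ℝ (Fin d)))
    [IsProbabilityMeasure μ] [IsProbabilityMeasure ν]
    (hμ : Integrable (fun x => ‖x‖ ^ 2) μ) (hν : Integrable (fun y => ‖y‖ ^ 2) ν) :
    ConvexOrder μ ν ↔
      ∀ ρ : Measure (EuclideanSpace ℝ (Fin d)), IsProbabilityMeasure ρ →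
        (∃ R : ℝ, ρ (closedBall (0 : EuclideanSpace ℝ (Fin d)) R)ᶜ = 0) →
        ∀ z : EuclideanSpace ℝ (Fin d),
          W2sq ν ρ - W2sq μ ρ ≤ W2sq ν (Measure.dirac z) - W2sq μ (Measure.dirac z) :=
  convexOrder_iff_continuousConvexOrder.trans (stmt3_general hμ hν)
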